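/- arXiv:1803.11038 — 2 statements merged into one kernel-verified Lean document; each statement's English description precedes it below -/
import Mathlib

section
/- Let D be a nonprincipal ultrafilter on ℕ and let Z' = ⟨S', P', C', I'⟩ be the ultrapower of Z with respect to D. Then the term algebra of Z and the term algebra of Z', regarded as first-order structures in the language with binary operation symbols + and ;, unary operation symbols − and ⁻, and constant symbol 1' (interpreted respectively by union, the composition operation ;, complementation in S resp. S', the converse operation ⁻, and I resp. I'), are not elementarily equivalent. -/
open FirstOrder FirstOrder.Language

/-- Relation symbols of the language of atom structures: a unary `I`,
a binary `C` and a ternary `P`. -/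
inductive AtomRel : ℕ → Type
  | I : AtomRel 1
  | C : AtomRel 2
  | P : AtomRel 3

/-- The first-order language with one ternary relation symbol `P`, one binary
relation symbol `C` and one unary relation symbol `I`. -/
def atomLang : FirstOrder.Language :=
  ⟨fun _ => Empty, AtomRel⟩

/-- Function symbols of the language of the term algebras: a constant `1'`,
unary symbols `−` (complement) and `⁻` (converse), binary symbols `+` and `;`. -/
inductive AlgFun : ℕ → Type
  | one : AlgFun 0
  | compl : AlgFun 1
  | conv : AlgFun 1
  | add : AlgFun 2
  | comp : AlgFun 2

/-- The first-order language with binary operations `+` and `;`, unary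
operations `−` and `⁻`, and a constant `1'`. -/
def algLang : FirstOrder.Language :=
  ⟨AlgFun, fun _ => Empty⟩

section Generic

variable {M : Type} [atomLang.Structure M]

/-- The interpretation of the unary relation symbol `I`. -/
def mI (a : M) : Prop := Structure.RelMap (L := atomLang) (AtomRel.I : atomLang.Relations 1) ![a]

/-- The interpretation of the binary relation symbol `C`. -/
def mC (a b : M) : Prop := Structure.RelMap (L := atomLang) (AtomRel.C : atomLang.Relations 2) ![a, b]

/-- The interpretation of the ternary relation symbol `P`. -/
def mP (a b c : M) : Prop := Structure.RelMap (L := atomLang) (AtomRel.P : atomLang.Relations 3) ![a, b, c]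

/-- `X ; Y = {u : ∃ x ∈ X, y ∈ Y, P(x,y,u)}`. -/
def sComp (X Y : Set M) : Set M := {u | ∃ x ∈ X, ∃ y ∈ Y, mP x y u}

/-- `X⁻ = {u : ∃ x ∈ X, C(x,u)}`. -/
def sConv (X : Set M) : Set M := {u | ∃ x ∈ X, mC x u}

/-- The set of elements satisfying `I`. -/
def idSet (M : Type) [atomLang.Structure M] : Set M := {a | mI a}

end Generic

/-- Membership in the term algebra: the smallest collection of subsets of `M`
containing all singletons and the set `I`, closed under binary union,
complementation, `;` and `⁻`. -/
inductive InTA (M : Type) [atomLang.Structure M] : Set M → Prop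
  | sing (a : M) : InTA M {a}
  | idset : InTA M (idSet M)
  | union {X Y : Set M} : InTA M X → InTA M Y → InTA M (X ∪ Y)
  | compl {X : Set M} : InTA M X → InTA M Xᶜ
  | comp {X Y : Set M} : InTA M X → InTA M Y → InTA M (sComp X Y)
  | conv {X : Set M} : InTA M X → InTA M (sConv X)

/-- The term algebra of an atom structure, as a type. -/
def TermAlg (M : Type) [atomLang.Structure M] : Type := {X : Set M // InTA M X}

/-- The term algebra as a structure in the language `algLang`:
`+` is union, `−` is complement, `;` and `⁻` are the operations defined from
`P` and `C`, and `1'` is the set `I`. -/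
instance termAlgStructure (M : Type) [atomLang.Structure M] :
    algLang.Structure (TermAlg M) where
  funMap := fun {_} f v =>
    match f with
    | .one => ⟨idSet M, InTA.idset⟩
    | .compl => ⟨(v 0).1ᶜ, InTA.compl (v 0).2⟩
    | .conv => ⟨sConv (v 0).1, InTA.conv (v 0).2⟩
    | .add => ⟨(v 0).1 ∪ (v 1).1, InTA.union (v 0).2 (v 1).2⟩
    | .comp => ⟨sComp (v 0).1 (v 1).1, InTA.comp (v 0).2 (v 1).2⟩
  RelMap := fun {_} r _ => r.elim

/-- `a` goes from `x` to `y` when `P(x,a,a)` and `P(a,y,a)`. -/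
def goes {M : Type} [atomLang.Structure M] (a x y : M) : Prop := mP x a a ∧ mP a y a

/-- `X` splits the pair `(x,y)` when some `a ∈ X` and some `b ∉ X` both go
from `x` to `y`. -/
def SplitsG {M : Type} [atomLang.Structure M] (X : Set M) (x y : M) : Prop :=
  ∃ a ∈ X, ∃ b ∉ X, goes a x y ∧ goes b x y

/-- The pair `(x,y)` is splitable when `x ≠ y` and at least two distinct
elements go from `x` to `y`. -/
def SplitableG {M : Type} [atomLang.Structure M] (x y : M) : Prop :=
  x ≠ y ∧ ∃ a b : M, a ≠ b ∧ goes a x y ∧ goes b x y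

/-- Converse of a binary relation, as a set of pairs. -/
def relConv {U : Type} (R : Set (U × U)) : Set (U × U) := {p | (p.2, p.1) ∈ R}

/-- Composition of binary relations, as sets of pairs. -/
def relComp {U : Type} (R T : Set (U × U)) : Set (U × U) :=
  {p | ∃ w, (p.1, w) ∈ R ∧ (w, p.2) ∈ T}

/-- An atom structure is completely representable. -/
def CompRep (M : Type) [atomLang.Structure M] : Prop :=
  ∃ (U : Type) (rep : M → Set (U × U)),
    (∀ a : M, (rep a).Nonempty) ∧
    (∀ a b : M, a ≠ b → Disjoint (rep a) (rep b)) ∧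
    (⋃ a : M, rep a) = Set.univ ∧
    (∀ a : M, (mI a ↔ rep a ⊆ Set.diagonal U) ∧
      ((rep a ⊆ Set.diagonal U) ↔ (rep a ∩ Set.diagonal U).Nonempty)) ∧
    (∀ a b : M, (mC a b ↔ rep b = relConv (rep a)) ∧
      ((rep b = relConv (rep a)) ↔ (rep b ∩ relConv (rep a)).Nonempty)) ∧
    (∀ a b c : M, (mP a b c ↔ rep c ⊆ relComp (rep a) (rep b)) ∧
      ((rep c ⊆ relComp (rep a) (rep b)) ↔ (rep c ∩ relComp (rep a) (rep b)).Nonempty))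
/-- The atoms of the atom structure `Z`: identity atoms `id n i` (`i ≤ n`),
split atoms `r n k` and their converses `rc n k` (`1 ≤ k ≤ n`), and
atoms `w n i m j` (`i ≤ n`, `j ≤ m`).  Distinct constructor applications give
pairwise distinct elements. -/
inductive Atom : Type
  | id : (n i : ℕ) → i ≤ n → Atom
  | r : (n k : ℕ) → 1 ≤ k → k ≤ n → Atom
  | rc : (n k : ℕ) → 1 ≤ k → k ≤ n → Atom
  | w : (n i m j : ℕ) → i ≤ n → j ≤ m → Atom

/-- The domain function of `Z`. -/
def Atom.dom : Atom → Atom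
  | .id n i h => .id n i h
  | .r n _ _ _ => .id n 0 (Nat.zero_le n)
  | .rc n k _ h2 => .id n k h2
  | .w n i _ _ hi _ => .id n i hi

/-- The range function of `Z`. -/
def Atom.rg : Atom → Atom
  | .id n i h => .id n i h
  | .r n k _ h2 => .id n k h2
  | .rc n _ _ _ => .id n 0 (Nat.zero_le n)
  | .w _ _ m j _ hj => .id m j hj

/-- Membership in the set `I` of identity atoms of `Z`. -/
def Atom.isId : Atom → Prop
  | .id _ _ _ => True
  | _ => False

/-- The converse function on atoms of `Z`. -/
def Atom.cnv : Atom → Atom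
  | .id n i h => .id n i h
  | .r n k h1 h2 => .rc n k h1 h2
  | .rc n k h1 h2 => .r n k h1 h2
  | .w n i m j hi hj => .w m j n i hj hi

/-- The binary relation `C` of `Z`: it consists of the pairs `(x,x)` for
`x ∈ I`, `(r n k, rc n k)`, `(rc n k, r n k)` and `(w n i m j, w m j n i)`,
i.e. exactly the pairs `(a, cnv a)`. -/
def Crel (a b : Atom) : Prop := b = Atom.cnv a

/-- The ternary relation `P` of `Z`: the triples `(dom a, a, a)` and
`(a, rg a, a)` for `a ∈ S`, the triples `(a, b, dom a)` for `(a,b) ∈ C`, and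
the triples `(a,b,c)` of non-identity atoms with `dom a = dom c`,
`rg a = dom b`, `rg b = rg c`. -/
def Prel (a b c : Atom) : Prop :=
  (a = b.dom ∧ c = b) ∨
  (b = a.rg ∧ c = a) ∨
  (Crel a b ∧ c = a.dom) ∨
  (¬ a.isId ∧ ¬ b.isId ∧ ¬ c.isId ∧ a.dom = c.dom ∧ a.rg = b.dom ∧ b.rg = c.rg)

/-- `Z` as a structure for the language `atomLang`. -/
instance atomStructureZ : atomLang.Structure Atom where
  funMap := fun {_} f _ => f.elim
  RelMap := fun {_} r v =>
    match r with
    | AtomRel.I => (v 0).isId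
    | AtomRel.C => Crel (v 0) (v 1)
    | AtomRel.P => Prel (v 0) (v 1) (v 2)

/-- `X ⊆ S` splits the pair `(x,y)` if there are `a ∈ X` and `b ∉ X` with
`dom a = dom b = x` and `rg a = rg b = y`. -/
def Splits (X : Set Atom) (x y : Atom) : Prop :=
  ∃ a ∈ X, ∃ b ∉ X, a.dom = x ∧ a.rg = y ∧ b.dom = x ∧ b.rg = y

/-- The pair `(x,y)` is splitable if `x ≠ y` and there are two distinct
elements `a ≠ b` of `S` with `dom a = dom b = x` and `rg a = rg b = y`. -/
def Splitable (x y : Atom) : Prop :=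
  x ≠ y ∧ ∃ a b : Atom, a ≠ b ∧ a.dom = x ∧ a.rg = y ∧ b.dom = x ∧ b.rg = y

/-- The ultrapower `Z'` of the atom structure `Z` with respect to an
ultrafilter `D` on `J`. -/
def UPow (J : Type) (D : Ultrafilter J) : Type :=
  (D : Filter J).Product (fun _ : J => Atom)

/-- The ultraproduct structure on the ultrapower of `Z`. -/
instance uPowStructure (J : Type) (D : Ultrafilter J) : atomLang.Structure (UPow J D) :=
  inferInstanceAs (atomLang.Structure ((D : Filter J).Product fun _ : J => Atom))

/-!
In `Z` two distinct atoms with the same domain and range, these being different, are *mates*: one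
of them is some `r n k` or `rc n k`, the other one a `w`. Hence every pair `(id n 0, id n k)` with
`1 ≤ k ≤ n` is splitable, and the finitely many atoms `r n k` and `rc n k` with a given domain `x`
form an element of the term algebra that splits all splitable pairs `(x, y)`. That such an element
exists for every `x` is a first-order property of the term algebra, whose Boolean atoms are the
singletons.

It fails in the ultrapower. For every `k`, exchanging mates along the pairs `(id n 0, id n k)` is an
automorphism of `Z`, hence induces one of the ultrapower, and each element of the ultrapower is
moved by at most one of these. So every element of the term algebra is invariant under all but
finitely many of them. If `x` is represented by `id (ν j) 0` with `ν` tending to infinity, there are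
infinitely many splitable pairs `(x, y_k)`, and a set invariant under the `k`-th automorphism does
not split the `k`-th of them.
-/

section Formulas

variable {α : Type} {n : ℕ}

/-- The term `s + t`. -/
def addTerm (s t : algLang.Term α) : algLang.Term α :=
  Functions.apply₂ (AlgFun.add : algLang.Functions 2) s t

/-- The term `−s`. -/
def complTerm (s : algLang.Term α) : algLang.Term α :=
  Functions.apply₁ (AlgFun.compl : algLang.Functions 1) s

/-- The term `s ; t`. -/
def compTerm (s t : algLang.Term α) : algLang.Term α :=
  Functions.apply₂ (AlgFun.comp : algLang.Functions 2) s t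

/-- The constant term denoting the set of identity atoms. -/
def oneTerm : algLang.Term α :=
  Constants.term (AlgFun.one : algLang.Functions 0)

/-- The Boolean order `s ≤ t` of the term algebra, expressed as `s + t = t`. -/
def leFormula (s t : algLang.Term (α ⊕ Fin n)) : algLang.BoundedFormula α n :=
  addTerm s t =' t

/-- The `i`-th variable is an atom of the Boolean algebra: it is nonzero, and it lies below every
element or below its complement. -/
def atomFormula (i : Fin n) : algLang.BoundedFormula α n :=
  ∼(leFormula (&i) (complTerm (&i))) ⊓
    ∀' (leFormula (&i.castSucc) (&(Fin.last n)) ⊔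
      leFormula (&i.castSucc) (complTerm (&(Fin.last n))))

/-- Universal quantification over the atoms of the term algebra. -/
def allAtoms (φ : algLang.BoundedFormula α (n + 1)) : algLang.BoundedFormula α n :=
  ∀' (atomFormula (Fin.last n) ⟹ φ)

/-- Existential quantification over the atoms of the term algebra. -/
def exAtom (φ : algLang.BoundedFormula α (n + 1)) : algLang.BoundedFormula α n :=
  ∃' (atomFormula (Fin.last n) ⊓ φ)

/-- The counterpart of `goes` in the term algebra: `a ≤ x ; a` and `a ≤ a ; y`. -/
def goesFormula (a x y : algLang.Term (α ⊕ Fin n)) : algLang.BoundedFormula α n :=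
  leFormula a (compTerm x a) ⊓ leFormula a (compTerm a y)

/-- With the variables `0` and `2` standing for atoms `x` and `y`: `(x, y)` is splitable. -/
def splitableFormula : algLang.BoundedFormula α 3 :=
  ∼(&0 =' &2) ⊓ exAtom (exAtom
    (∼(&3 =' &4) ⊓ (goesFormula (&3) (&0) (&2) ⊓ goesFormula (&4) (&0) (&2))))

/-- With the variables `0`, `1` and `2` standing for an atom `x`, an element `X` and an atom `y`:
`X` splits the pair `(x, y)`. -/
def splitsFormula : algLang.BoundedFormula α 3 :=
  exAtom (exAtom (leFormula (&3) (&1) ⊓ (∼(leFormula (&4) (&1)) ⊓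
    (goesFormula (&3) (&0) (&2) ⊓ goesFormula (&4) (&0) (&2)))))

/-- The sentence that holds in the term algebra of `Z` and fails in that of its ultrapower: every
identity atom `x` admits an element that splits all splitable pairs `(x, y)` of identity atoms. -/
def splittersSentence : algLang.Sentence :=
  allAtoms (leFormula (&0) oneTerm ⟹
    ∃' allAtoms (leFormula (&2) oneTerm ⟹ splitableFormula ⟹ splitsFormula))

end Formulas

section Realization

variable {M : Type} [atomLang.Structure M] {α : Type} {n : ℕ}

/-- The singleton `{a}` as an element of the term algebra. -/
def TermAlg.singleton (a : M) : TermAlg M := ⟨{a}, InTA.sing a⟩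

theorem TermAlg.singleton_val (a : M) : (TermAlg.singleton a).1 = {a} := rfl

theorem TermAlg.singleton_injective :
    Function.Injective (TermAlg.singleton : M → TermAlg M) := fun _ _ h =>
  Set.singleton_injective (congrArg Subtype.val h)

theorem realize_addTerm (s t : algLang.Term α) (v : α → TermAlg M) :
    ((addTerm s t).realize v).1 = (s.realize v).1 ∪ (t.realize v).1 := rfl

theorem realize_complTerm (s : algLang.Term α) (v : α → TermAlg M) :
    ((complTerm s).realize v).1 = (s.realize v).1ᶜ := rfl

theorem realize_compTerm (s t : algLang.Term α) (v : α → TermAlg M) :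
    ((compTerm s t).realize v).1 = sComp (s.realize v).1 (t.realize v).1 := rfl

theorem realize_oneTerm (v : α → TermAlg M) :
    ((oneTerm : algLang.Term α).realize v).1 = idSet M := rfl

variable (v : α → TermAlg M) (xs : Fin n → TermAlg M)

theorem realize_leFormula (s t : algLang.Term (α ⊕ Fin n)) :
    (leFormula s t).Realize v xs ↔
      (s.realize (Sum.elim v xs)).1 ⊆ (t.realize (Sum.elim v xs)).1 := by
  rw [leFormula, BoundedFormula.realize_bdEqual, ← Set.union_eq_right, ← realize_addTerm]
  exact Subtype.ext_iff

theorem TermAlg.exists_eq_singleton_iff (X : TermAlg M) :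
    (∃ a, X = TermAlg.singleton a) ↔
      ¬ X.1 ⊆ X.1ᶜ ∧ ∀ Y : TermAlg M, X.1 ⊆ Y.1 ∨ X.1 ⊆ Y.1ᶜ := by
  constructor
  · rintro ⟨a, rfl⟩
    simp [TermAlg.singleton_val, em]
  · rintro ⟨hne, hX⟩
    obtain ⟨a, ha, -⟩ := Set.not_subset.1 hne
    have hsub : X.1 ⊆ {a} := (hX (TermAlg.singleton a)).resolve_right fun h => h ha rfl
    exact ⟨a, Subtype.ext (hsub.antisymm (Set.singleton_subset_iff.2 ha))⟩

theorem realize_atomFormula (i : Fin n) :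
    (atomFormula i).Realize v xs ↔ ∃ a, xs i = TermAlg.singleton a := by
  simp [atomFormula, realize_leFormula, realize_complTerm, TermAlg.exists_eq_singleton_iff]

theorem realize_allAtoms (φ : algLang.BoundedFormula α (n + 1)) :
    (allAtoms φ).Realize v xs ↔ ∀ a : M, φ.Realize v (Fin.snoc xs (TermAlg.singleton a)) := by
  simp [allAtoms, realize_atomFormula]

theorem realize_exAtom (φ : algLang.BoundedFormula α (n + 1)) :
    (exAtom φ).Realize v xs ↔ ∃ a : M, φ.Realize v (Fin.snoc xs (TermAlg.singleton a)) := by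
  simp [exAtom, realize_atomFormula]

theorem mem_sComp_singleton {a b c : M} : c ∈ sComp {a} {b} ↔ mP a b c := by
  simp [sComp]

theorem realize_goesFormula (a x y : algLang.Term (α ⊕ Fin n)) :
    (goesFormula a x y).Realize v xs ↔
      (a.realize (Sum.elim v xs)).1 ⊆
        sComp (x.realize (Sum.elim v xs)).1 (a.realize (Sum.elim v xs)).1 ∧
      (a.realize (Sum.elim v xs)).1 ⊆
        sComp (a.realize (Sum.elim v xs)).1 (y.realize (Sum.elim v xs)).1 := by
  simp only [goesFormula, BoundedFormula.realize_inf, realize_leFormula, realize_compTerm]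

theorem realize_splitableFormula (X : TermAlg M) (x y : M) :
    splitableFormula.Realize v ![TermAlg.singleton x, X, TermAlg.singleton y] ↔
      SplitableG x y := by
  simp [splitableFormula, realize_exAtom, realize_goesFormula, mem_sComp_singleton,
    TermAlg.singleton_val, TermAlg.singleton_injective.eq_iff, SplitableG, goes]

theorem realize_splitsFormula (X : TermAlg M) (x y : M) :
    splitsFormula.Realize v ![TermAlg.singleton x, X, TermAlg.singleton y] ↔
      SplitsG X.1 x y := by
  simp [splitsFormula, realize_exAtom, realize_leFormula, realize_goesFormula,
    mem_sComp_singleton, TermAlg.singleton_val, SplitsG, goes]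

/-- The meaning of `splittersSentence` on the atom structure: for every `x` in `I`, some element of
the term algebra splits all splitable pairs `(x, y)` with `y` in `I`. -/
def HasSplitters (M : Type) [atomLang.Structure M] : Prop :=
  ∀ x : M, mI x → ∃ X : Set M, InTA M X ∧ ∀ y : M, mI y → SplitableG x y → SplitsG X x y

theorem realize_splittersSentence : TermAlg M ⊨ splittersSentence ↔ HasSplitters M := by
  have hsnoc₁ (x : TermAlg M) : (Fin.snoc default x : Fin 1 → TermAlg M) = ![x] := by
    ext i; fin_cases i; rfl
  have hexists (p : Set M → Prop) : (∃ X : TermAlg M, p X.1) ↔ ∃ X, InTA M X ∧ p X := by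
    simp [TermAlg]
  simp only [Sentence.Realize, Formula.Realize, splittersSentence, Nat.reduceAdd, Fin.isValue,
    Function.comp_apply, realize_allAtoms, hsnoc₁, BoundedFormula.realize_imp, realize_leFormula,
    Term.realize_var, Sum.elim_inr, Matrix.cons_val_fin_one, TermAlg.singleton_val,
    realize_oneTerm, Set.singleton_subset_iff, BoundedFormula.realize_ex, Nat.succ_eq_add_one,
    Matrix.Fin.snoc_vecCons, Matrix.Fin.snoc_vecEmpty, Matrix.cons_val,
    realize_splitableFormula, realize_splitsFormula, HasSplitters]
  refine forall₂_congr fun x _ => ?_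
  exact hexists fun X => ∀ y, mI y → SplitableG x y → SplitsG X x y

end Realization

section Invariance

variable {M : Type} [atomLang.Structure M] (e : M ≃[atomLang] M)

theorem mI_apply_iff (a : M) : mI (e a) ↔ mI a := by
  have h : ![e a] = e ∘ ![a] := FinVec.map_eq e ![a]
  rw [mI, h]
  exact e.map_rel (AtomRel.I : atomLang.Relations 1) ![a]

theorem mC_apply_iff (a b : M) : mC (e a) (e b) ↔ mC a b := by
  have h : ![e a, e b] = e ∘ ![a, b] := FinVec.map_eq e ![a, b]
  rw [mC, h]
  exact e.map_rel (AtomRel.C : atomLang.Relations 2) ![a, b]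

theorem mP_apply_iff (a b c : M) : mP (e a) (e b) (e c) ↔ mP a b c := by
  have h : ![e a, e b, e c] = e ∘ ![a, b, c] := FinVec.map_eq e ![a, b, c]
  rw [mP, h]
  exact e.map_rel (AtomRel.P : atomLang.Relations 3) ![a, b, c]

theorem preimage_idSet : e ⁻¹' idSet M = idSet M := Set.ext (mI_apply_iff e)

theorem preimage_sConv (X : Set M) : e ⁻¹' sConv X = sConv (e ⁻¹' X) :=
  Set.ext fun a => e.surjective.exists.trans <|
    exists_congr fun b => and_congr_right' (mC_apply_iff e b a)

theorem preimage_sComp (X Y : Set M) : e ⁻¹' sComp X Y = sComp (e ⁻¹' X) (e ⁻¹' Y) :=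
  Set.ext fun a => e.surjective.exists.trans <| exists_congr fun b => and_congr_right' <|
    e.surjective.exists.trans <| exists_congr fun c => and_congr_right' (mP_apply_iff e b c a)

theorem InTA.eventually_preimage_eq {ι : Type*} {l : Filter ι} {τ : ι → M ≃[atomLang] M}
    (hτ : ∀ a, ∀ᶠ k in l, τ k a = a) {X : Set M} (hX : InTA M X) :
    ∀ᶠ k in l, τ k ⁻¹' X = X := by
  induction hX with
  | sing a =>
    filter_upwards [hτ a] with k hk
    ext b
    simp only [Set.mem_preimage, Set.mem_singleton_iff]
    rw [← (τ k).injective.eq_iff (a := b), hk]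
  | idset => exact .of_forall fun k => preimage_idSet (τ k)
  | union _ _ hX hY => filter_upwards [hX, hY] with k hX hY using by rw [Set.preimage_union, hX, hY]
  | compl _ hX => filter_upwards [hX] with k hX using by rw [Set.preimage_compl, hX]
  | comp _ _ hX hY => filter_upwards [hX, hY] with k hX hY using by rw [preimage_sComp, hX, hY]
  | conv _ hX => filter_upwards [hX] with k hX using by rw [preimage_sConv, hX]

theorem InTA.of_finite {X : Set M} (hX : X.Finite) : InTA M X := by
  induction X, hX using Set.Finite.induction_on with
  | empty => simpa using (idset (M := M)).union (idset.compl) |>.compl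
  | insert _ _ ih => exact (sing _).union ih

end Invariance

section Ultraproduct

variable {L : Language} {J : Type*} {D : Ultrafilter J}

theorem ultraproduct_relMap_cast {M : J → Type*} [∀ j, L.Structure (M j)] {n : ℕ}
    (R : L.Relations n) (x : Fin n → ∀ j, M j) :
    (Structure.RelMap R fun i => (x i : (D : Filter J).Product M)) ↔
      ∀ᶠ j in D, Structure.RelMap R fun i => x i j :=
  relMap_quotient_mk' (ps := Ultraproduct.setoidPrestructure M D)
    (s := (D : Filter J).productSetoid M) R x

/-- The isomorphism of ultraproducts induced by isomorphisms of the factors. -/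
def ultraproductCongr {M N : J → Type*} [∀ j, L.Structure (M j)] [∀ j, L.Structure (N j)]
    (e : ∀ j, M j ≃[L] N j) : (D : Filter J).Product M ≃[L] (D : Filter J).Product N where
  toEquiv := Quotient.congr (Equiv.piCongrRight fun j => (e j).toEquiv) fun f g =>
    Filter.eventually_congr (.of_forall fun j => (e j).injective.eq_iff.symm)
  map_fun' F x := by
    choose f hf using fun i => Quotient.exists_rep (x i)
    obtain rfl : (fun i => ⟦f i⟧) = x := funext hf
    refine (congrArg _ (Ultraproduct.funMap_cast F f)).trans ?_
    refine Eq.trans ?_ (Ultraproduct.funMap_cast F fun i j => e j (f i j)).symm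
    exact congrArg _ (funext fun j => (e j).map_fun F fun i => f i j)
  map_rel' R x := by
    choose f hf using fun i => Quotient.exists_rep (x i)
    obtain rfl : (fun i => ⟦f i⟧) = x := funext hf
    refine (ultraproduct_relMap_cast R fun i j => e j (f i j)).trans ?_
    refine Iff.trans ?_ (ultraproduct_relMap_cast R f).symm
    exact Filter.eventually_congr (.of_forall fun j => (e j).map_rel R fun i => f i j)

end Ultraproduct

section UltrapowerOfZ

variable {J : Type} {D : Ultrafilter J}

/-- The element of the ultrapower represented by a family of atoms of `Z`. -/
def UPow.mk (D : Ultrafilter J) (f : J → Atom) : UPow J D := Quotient.mk _ f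

theorem UPow.mk_surjective : Function.Surjective (UPow.mk D) := Quotient.exists_rep

theorem UPow.mk_eq_iff {f g : J → Atom} : UPow.mk D f = UPow.mk D g ↔ ∀ᶠ j in D, f j = g j :=
  Quotient.eq

theorem UPow.mk_ne_iff {f g : J → Atom} : UPow.mk D f ≠ UPow.mk D g ↔ ∀ᶠ j in D, f j ≠ g j :=
  (not_congr UPow.mk_eq_iff).trans Ultrafilter.eventually_not.symm

theorem UPow.mI_mk {f : J → Atom} : mI (UPow.mk D f) ↔ ∀ᶠ j in D, mI (f j) := by
  have hmap : ![UPow.mk D f] = UPow.mk D ∘ ![f] := FinVec.map_eq _ ![f]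
  rw [mI, hmap]
  exact ultraproduct_relMap_cast (L := atomLang) (AtomRel.I : atomLang.Relations 1) ![f]

theorem UPow.mP_mk {f g h : J → Atom} :
    mP (UPow.mk D f) (UPow.mk D g) (UPow.mk D h) ↔ ∀ᶠ j in D, mP (f j) (g j) (h j) := by
  have hmap : ![UPow.mk D f, UPow.mk D g, UPow.mk D h] = UPow.mk D ∘ ![f, g, h] :=
    FinVec.map_eq _ ![f, g, h]
  rw [mP, hmap]
  exact ultraproduct_relMap_cast (L := atomLang) (AtomRel.P : atomLang.Relations 3) ![f, g, h]

theorem UPow.goes_mk {f g h : J → Atom} :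
    goes (UPow.mk D f) (UPow.mk D g) (UPow.mk D h) ↔ ∀ᶠ j in D, goes (f j) (g j) (h j) := by
  simp only [goes, UPow.mP_mk, Filter.eventually_and]

theorem UPow.splitableG_mk {f g : J → Atom} (h : ∀ᶠ j in D, SplitableG (f j) (g j)) :
    SplitableG (UPow.mk D f) (UPow.mk D g) := by
  obtain ⟨hne, hab⟩ := Filter.eventually_and.1 h
  have : Nonempty Atom := ⟨.id 0 0 le_rfl⟩
  obtain ⟨a, ha⟩ := Filter.skolem.1 hab
  obtain ⟨b, hb⟩ := Filter.skolem.1 ha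
  simp only [Filter.eventually_and] at hb
  refine ⟨?_, UPow.mk D a, UPow.mk D b, ?_, UPow.goes_mk.2 hb.2.1, UPow.goes_mk.2 hb.2.2⟩
  · exact UPow.mk_ne_iff.2 hne
  · exact UPow.mk_ne_iff.2 hb.1

end UltrapowerOfZ

namespace Atom

theorem isId_id (n i : ℕ) (hi : i ≤ n) : (id n i hi).isId := trivial

theorem isId_dom (a : Atom) : a.dom.isId := by cases a <;> trivial

theorem isId_rg (a : Atom) : a.rg.isId := by cases a <;> trivial

theorem dom_eq_self {a : Atom} (ha : a.isId) : a.dom = a := by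
  cases a <;> first | rfl | exact ha.elim

theorem rg_eq_self {a : Atom} (ha : a.isId) : a.rg = a := by
  cases a <;> first | rfl | exact ha.elim

theorem cnv_eq_self {a : Atom} (ha : a.isId) : a.cnv = a := by
  cases a <;> first | rfl | exact ha.elim

theorem mP_iff_prel {a b c : Atom} : mP a b c ↔ Prel a b c := Iff.rfl

theorem mP_left_iff {x a : Atom} (hx : x.isId) : mP x a a ↔ a.dom = x := by
  rw [mP_iff_prel]
  refine ⟨?_, fun h => .inl ⟨h.symm, rfl⟩⟩
  rintro (⟨h, -⟩ | ⟨-, rfl⟩ | ⟨-, rfl⟩ | ⟨h, -⟩)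
  · exact h.symm
  · exact dom_eq_self hx
  · rw [dom_eq_self hx, dom_eq_self hx]
  · exact absurd hx h

theorem mP_right_iff {y a : Atom} (hy : y.isId) : mP a y a ↔ a.rg = y := by
  rw [mP_iff_prel]
  refine ⟨?_, fun h => .inr (.inl ⟨h.symm, rfl⟩)⟩
  rintro (⟨-, rfl⟩ | ⟨h, -⟩ | ⟨rfl, h⟩ | ⟨-, h, -⟩)
  · exact rg_eq_self hy
  · exact h.symm
  · have ha : a.isId := h ▸ isId_dom a
    rw [rg_eq_self ha, cnv_eq_self ha]
  · exact absurd hy h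

theorem goes_iff {a x y : Atom} (hx : x.isId) (hy : y.isId) :
    goes a x y ↔ a.dom = x ∧ a.rg = y :=
  and_congr (mP_left_iff hx) (mP_right_iff hy)

/-- The involution exchanging `r n k` with `w n 0 n k` and `rc n k` with `w n k n 0`; it fixes all
other atoms. -/
def mate : Atom → Atom
  | .id n i h => .id n i h
  | .r n k _ h2 => .w n 0 n k (Nat.zero_le n) h2
  | .rc n k _ h2 => .w n k n 0 h2 (Nat.zero_le n)
  | .w n i m j hi hj =>
    if hr : n = m ∧ i = 0 ∧ 1 ≤ j then .r m j hr.2.2 hj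
    else if hrc : n = m ∧ j = 0 ∧ 1 ≤ i then .rc n i hrc.2.2 hi
    else .w n i m j hi hj

theorem mate_involutive : Function.Involutive mate := by
  intro a; cases a <;> grind [mate]

theorem dom_mate (a : Atom) : a.mate.dom = a.dom := by
  cases a <;> grind [mate, dom]

theorem rg_mate (a : Atom) : a.mate.rg = a.rg := by
  cases a <;> grind [mate, rg]

theorem isId_mate (a : Atom) : a.mate.isId ↔ a.isId := by
  cases a <;> grind [mate, isId]

theorem cnv_mate (a : Atom) : a.mate.cnv = a.cnv.mate := by
  cases a <;> grind [mate, cnv]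

theorem mate_eq_of_ne {a b : Atom} (hab : a ≠ b) (hdom : a.dom = b.dom) (hrg : a.rg = b.rg)
    (hne : a.dom ≠ a.rg) : a.mate = b := by
  cases a <;> cases b <;> grind [mate, dom, rg]

/-- The split atoms `r n k` and `rc n k`. -/
def IsSplit : Atom → Prop
  | .r _ _ _ _ => True
  | .rc _ _ _ _ => True
  | _ => False

theorem isSplit_mate_iff {a : Atom} (ha : a.mate ≠ a) : a.mate.IsSplit ↔ ¬ a.IsSplit := by
  cases a <;> grind [mate, IsSplit]

theorem finite_isSplit_dom_eq (x : Atom) : {a : Atom | a.IsSplit ∧ a.dom = x}.Finite := by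
  cases x with
  | id n i =>
    refine ((Set.finite_range fun k : Set.Icc 1 n => r n k k.2.1 k.2.2).union
      (Set.finite_range fun k : Set.Icc 1 n => rc n k k.2.1 k.2.2)).subset ?_
    rintro a ⟨ha, hdom⟩
    cases a with
    | r m k h1 h2 =>
      obtain ⟨rfl, -⟩ := Atom.id.inj hdom
      exact .inl ⟨⟨k, h1, h2⟩, rfl⟩
    | rc m k h1 h2 =>
      obtain ⟨rfl, -⟩ := Atom.id.inj hdom
      exact .inr ⟨⟨k, h1, h2⟩, rfl⟩
    | id | w => exact ha.elim
  | _ =>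
    refine Set.finite_empty.subset ?_
    rintro a ⟨-, hdom⟩
    cases a <;> grind [dom]

/-- The rank of an atom is the sum of the indices `i` of its domain and range, which determines
`k` for the atoms `r n k` and `rc n k` and for their mates. -/
def rank : Atom → ℕ
  | .id _ i _ => 2 * i
  | .r _ k _ _ => k
  | .rc _ k _ _ => k
  | .w _ i _ j _ _ => i + j

theorem rank_mate (a : Atom) : a.mate.rank = a.rank := by
  cases a <;> grind [mate, rank]

theorem rank_cnv (a : Atom) : a.cnv.rank = a.rank := by
  cases a <;> grind [cnv, rank]

/-- The map exchanging the mates of rank `k` and fixing all other atoms. -/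
def exchange (k : ℕ) (a : Atom) : Atom := if a.rank = k then a.mate else a

theorem exchange_involutive (k : ℕ) : Function.Involutive (exchange k) := by
  intro a
  grind [exchange, rank_mate, mate_involutive a]

theorem dom_exchange (k : ℕ) (a : Atom) : (a.exchange k).dom = a.dom := by
  grind [exchange, dom_mate]

theorem rg_exchange (k : ℕ) (a : Atom) : (a.exchange k).rg = a.rg := by
  grind [exchange, rg_mate]

theorem isId_exchange (k : ℕ) (a : Atom) : (a.exchange k).isId ↔ a.isId := by
  grind [exchange, isId_mate]

theorem cnv_exchange (k : ℕ) (a : Atom) : (a.exchange k).cnv = a.cnv.exchange k := by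
  grind [exchange, cnv_mate, rank_cnv]

section Automorphism

variable {e : Equiv.Perm Atom} (hdom : ∀ a, (e a).dom = a.dom) (hrg : ∀ a, (e a).rg = a.rg)
  (hid : ∀ a, (e a).isId ↔ a.isId) (hcnv : ∀ a, (e a).cnv = e a.cnv)

include hcnv in
theorem crel_apply_iff (a b : Atom) : Crel (e a) (e b) ↔ Crel a b := by
  rw [Crel, Crel, hcnv, e.apply_eq_iff_eq]

include hdom hid in
theorem apply_eq_iff_of_isId {a x : Atom} (hx : x.isId) : e a = x ↔ a = x := by
  have hfix : e x = x := by
    rw [← dom_eq_self ((hid x).2 hx), hdom, dom_eq_self hx]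
  rw [← e.apply_eq_iff_eq (x := a), hfix]

include hdom hrg hid hcnv in
theorem prel_apply_iff (a b c : Atom) : Prel (e a) (e b) (e c) ↔ Prel a b c := by
  simp only [Prel, hdom, hrg, hid, crel_apply_iff hcnv, e.apply_eq_iff_eq,
    apply_eq_iff_of_isId hdom hid, isId_dom, isId_rg]

/-- A permutation of the atoms of `Z` that preserves domain, range, identity atoms and converses
is an automorphism. -/
def automorphism : Atom ≃[atomLang] Atom where
  toEquiv := e
  map_fun' f := f.elim
  map_rel' R x := by
    cases R with
    | I => exact hid (x 0)
    | C => exact crel_apply_iff hcnv (x 0) (x 1)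
    | P => exact prel_apply_iff hdom hrg hid hcnv (x 0) (x 1) (x 2)

end Automorphism

/-- The automorphism of `Z` given by `Atom.exchange k`. -/
def exchangeEquiv (k : ℕ) : Atom ≃[atomLang] Atom :=
  automorphism (e := (exchange_involutive k).toPerm) (dom_exchange k) (rg_exchange k)
    (isId_exchange k) (cnv_exchange k)

theorem rank_eq_of_goes {a : Atom} {n k : ℕ} {hkn : k ≤ n} (hk : 1 ≤ k)
    (ha : goes a (.id n 0 n.zero_le) (.id n k hkn)) : a.rank = k := by
  obtain ⟨hdom, hrg⟩ := (goes_iff (isId_id ..) (isId_id ..)).1 ha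
  cases a <;> grind [dom, rg, rank]

theorem mate_eq_of_goes {a b x y : Atom} (hx : x.isId) (hy : y.isId) (hxy : x ≠ y) (hab : a ≠ b)
    (ha : goes a x y) (hb : goes b x y) : a.mate = b := by
  obtain ⟨hadom, harg⟩ := (goes_iff hx hy).1 ha
  obtain ⟨hbdom, hbrg⟩ := (goes_iff hx hy).1 hb
  apply mate_eq_of_ne hab
  · rw [hadom, hbdom]
  · rw [harg, hbrg]
  · rwa [hadom, harg]

theorem splitableG_id {n k : ℕ} (hk : 1 ≤ k) (hkn : k ≤ n) :
    SplitableG (.id n 0 n.zero_le : Atom) (.id n k hkn) := by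
  refine ⟨fun h => ?_, .r n k hk hkn, .w n 0 n k n.zero_le hkn, Atom.noConfusion, ?_, ?_⟩
  · have : 0 = k := (Atom.id.inj h).2
    lia
  · exact (goes_iff (isId_id ..) (isId_id ..)).2 ⟨rfl, rfl⟩
  · exact (goes_iff (isId_id ..) (isId_id ..)).2 ⟨rfl, rfl⟩

theorem exchange_eq_of_goes {a b : Atom} {n k : ℕ} {hkn : k ≤ n} (hk : 1 ≤ k) (hab : a ≠ b)
    (ha : goes a (.id n 0 n.zero_le) (.id n k hkn))
    (hb : goes b (.id n 0 n.zero_le) (.id n k hkn)) : a.exchange k = b := by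
  rw [exchange, if_pos (rank_eq_of_goes hk ha)]
  exact mate_eq_of_goes (isId_id ..) (isId_id ..) (splitableG_id hk hkn).1 hab ha hb

theorem hasSplitters : HasSplitters Atom := by
  intro x hx
  refine ⟨{a | a.IsSplit ∧ a.dom = x}, InTA.of_finite (finite_isSplit_dom_eq x), ?_⟩
  rintro y hy ⟨hxy, a, b, hab, ha, hb⟩
  have hmate : a.mate = b := mate_eq_of_goes hx hy hxy hab ha hb
  have hsplit : b.IsSplit ↔ ¬ a.IsSplit :=
    hmate ▸ isSplit_mate_iff fun h => hab (h.symm.trans hmate)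
  have hadom : a.dom = x := ((goes_iff hx hy).1 ha).1
  have hbdom : b.dom = x := ((goes_iff hx hy).1 hb).1
  by_cases hasplit : a.IsSplit
  · exact ⟨a, ⟨hasplit, hadom⟩, b, fun h => hsplit.1 h.1 hasplit, ha, hb⟩
  · exact ⟨b, ⟨hsplit.2 hasplit, hbdom⟩, a, fun h => hasplit h.1, hb, ha⟩

end Atom

section UltrapowerExchange

variable {J : Type} {D : Ultrafilter J}

/-- The automorphism of the ultrapower of `Z` induced by `Atom.exchange k`. -/
def UPow.exchangeEquiv (D : Ultrafilter J) (k : ℕ) : UPow J D ≃[atomLang] UPow J D :=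
  ultraproductCongr fun _ => Atom.exchangeEquiv k

theorem UPow.exchangeEquiv_mk (k : ℕ) (f : J → Atom) :
    UPow.exchangeEquiv D k (UPow.mk D f) = UPow.mk D fun j => (f j).exchange k := rfl

theorem UPow.eventually_rank_eq_of_ne {k : ℕ} {f : J → Atom}
    (h : UPow.exchangeEquiv D k (UPow.mk D f) ≠ UPow.mk D f) : ∀ᶠ j in D, (f j).rank = k := by
  rw [UPow.exchangeEquiv_mk, UPow.mk_ne_iff] at h
  exact h.mono fun j hj => by_contra fun hk => hj (if_neg hk)

theorem UPow.eventually_exchangeEquiv_eq (c : UPow J D) :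
    ∀ᶠ k in Filter.cofinite, UPow.exchangeEquiv D k c = c := by
  obtain ⟨f, rfl⟩ := UPow.mk_surjective c
  refine Set.Subsingleton.finite fun k hk l hl => ?_
  obtain ⟨j, hjk, hjl⟩ :=
    ((UPow.eventually_rank_eq_of_ne hk).and (UPow.eventually_rank_eq_of_ne hl)).exists
  exact hjk.symm.trans hjl

/-- The identity element of the ultrapower represented by the atoms `id (ν j) (i j)`. -/
def UPow.idMk (D : Ultrafilter J) (ν i : J → ℕ) (hi : i ≤ ν) : UPow J D :=
  UPow.mk D fun j => .id (ν j) (i j) (hi j)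

theorem UPow.mI_idMk (ν i : J → ℕ) (hi : i ≤ ν) : mI (UPow.idMk D ν i hi) :=
  UPow.mI_mk.2 (.of_forall fun j => Atom.isId_id (ν j) (i j) (hi j))

theorem UPow.splitableG_idMk {k : ℕ} (hk : 1 ≤ k) {ν i : J → ℕ} {hi : i ≤ ν}
    (hik : ∀ᶠ j in D, i j = k) :
    SplitableG (UPow.idMk D ν 0 zero_le) (UPow.idMk D ν i hi) :=
  UPow.splitableG_mk <| hik.mono fun _ hj => Atom.splitableG_id (hk.trans_eq hj.symm) _

theorem UPow.exchangeEquiv_eq_of_goes {k : ℕ} (hk : 1 ≤ k) {a b : UPow J D} (hab : a ≠ b)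
    {ν i : J → ℕ} {hi : i ≤ ν} (hik : ∀ᶠ j in D, i j = k)
    (ha : goes a (UPow.idMk D ν 0 zero_le) (UPow.idMk D ν i hi))
    (hb : goes b (UPow.idMk D ν 0 zero_le) (UPow.idMk D ν i hi)) :
    UPow.exchangeEquiv D k a = b := by
  obtain ⟨f, rfl⟩ := UPow.mk_surjective a
  obtain ⟨g, rfl⟩ := UPow.mk_surjective b
  rw [UPow.exchangeEquiv_mk, UPow.mk_eq_iff]
  filter_upwards [UPow.mk_ne_iff.1 hab, UPow.goes_mk.1 ha, UPow.goes_mk.1 hb, hik]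
    with j hne hf hg hj
  subst hj
  exact Atom.exchange_eq_of_goes hk hne hf hg

theorem UPow.not_hasSplitters {ν : J → ℕ} (hν : Filter.Tendsto ν D Filter.atTop) :
    ¬ HasSplitters (UPow J D) := by
  intro hsplitters
  obtain ⟨X, hX, hsplits⟩ := hsplitters (UPow.idMk D ν 0 zero_le) (UPow.mI_idMk ..)
  have hinvariant : ∀ᶠ k in Filter.atTop, UPow.exchangeEquiv D k ⁻¹' X = X :=
    Nat.cofinite_eq_atTop ▸ hX.eventually_preimage_eq UPow.eventually_exchangeEquiv_eq
  obtain ⟨k, hkX, hk⟩ := (hinvariant.and (Filter.eventually_ge_atTop 1)).exists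
  have hmin : ∀ᶠ j in D, min k (ν j) = k :=
    (hν.eventually_ge_atTop k).mono fun j hj => min_eq_left hj
  obtain ⟨a, ha, b, hb, hagoes, hbgoes⟩ :=
    hsplits (UPow.idMk D ν (fun j => min k (ν j)) fun j => min_le_right k (ν j))
      (UPow.mI_idMk ..) (UPow.splitableG_idMk hk hmin)
  have hab : UPow.exchangeEquiv D k a = b :=
    UPow.exchangeEquiv_eq_of_goes hk (ne_of_mem_of_not_mem ha hb) hmin hagoes hbgoes
  rw [← hkX, Set.mem_preimage, hab] at ha
  exact hb ha

end UltrapowerExchange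

section CountableIncompleteness

theorem exists_tendsto_atTop_of_not_countableInterFilter {J : Type*} {D : Ultrafilter J}
    (hD : ¬ CountableInterFilter (D : Filter J)) :
    ∃ ν : J → ℕ, Filter.Tendsto ν D Filter.atTop := by
  classical
  have hseq : ∃ s : ℕ → Set J, (∀ n, s n ∈ D) ∧ ⋂ n, s n ∉ D := by
    contrapose! hD
    refine ⟨fun S hS hSD => ?_⟩
    rcases S.eq_empty_or_nonempty with rfl | hne
    · simp
    · obtain ⟨s, rfl⟩ := hS.exists_eq_range hne
      exact Set.sInter_range s ▸ hD s (Set.forall_mem_range.1 hSD)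
  obtain ⟨s, hs, hinter⟩ := hseq
  have hleave : ∀ᶠ j in D, ∃ n, j ∉ s n :=
    Filter.mem_of_superset (Ultrafilter.compl_mem_iff_notMem.2 hinter) fun j hj => by
      simpa only [Set.mem_compl_iff, Set.mem_iInter, not_forall, Set.mem_ofPred_eq] using hj
  refine ⟨fun j => if h : ∃ n, j ∉ s n then Nat.find h else 0, Filter.tendsto_atTop.2 fun k => ?_⟩
  have hstay : ∀ᶠ j in D, ∀ n < k, j ∈ s n :=
    (Set.finite_lt_nat k).eventually_all.2 fun n _ => hs n
  filter_upwards [hleave, hstay] with j hj hjs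
  rw [dif_pos hj, Nat.le_find_iff]
  exact fun n hn => not_not.2 (hjs n hn)

theorem not_countableInterFilter_of_ne_pure {J : Type*} [Countable J] {D : Ultrafilter J}
    (hD : ∀ j, D ≠ pure j) : ¬ CountableInterFilter (D : Filter J) := by
  intro h
  have hne (j : J) : ∀ᶠ i in D, i ≠ j := by
    refine Ultrafilter.eventually_not.2 fun hj => ?_
    obtain ⟨_, rfl, hpure⟩ := Ultrafilter.eq_pure_of_finite_mem (Set.finite_singleton j) hj
    exact hD _ hpure
  obtain ⟨j, hj⟩ := (eventually_countable_forall.2 hne).exists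
  exact hj j rfl

end CountableIncompleteness

theorem stmt_14_general {J : Type} (D : Ultrafilter J)
    (hD : ¬ CountableInterFilter (D : Filter J)) :
    ¬ (TermAlg Atom ≅[algLang] TermAlg (UPow J D)) := by
  intro hequiv
  obtain ⟨ν, hν⟩ := exists_tendsto_atTop_of_not_countableInterFilter hD
  have hsplitters : HasSplitters Atom ↔ HasSplitters (UPow J D) := by
    rw [← realize_splittersSentence, ← realize_splittersSentence]
    exact elementarilyEquivalent_iff.1 hequiv splittersSentence
  exact UPow.not_hasSplitters hν (hsplitters.1 Atom.hasSplitters)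

/-- For a nonprincipal ultrafilter `D` on `ℕ`, the term algebra of `Z` and the
term algebra of the ultrapower `Z'` of `Z` by `D`, regarded as structures in
the language `algLang`, are not elementarily equivalent. -/
theorem stmt_14 (D : Ultrafilter ℕ) (hD : ∀ n : ℕ, D ≠ pure n) :
    ¬ (TermAlg Atom ≅[algLang] TermAlg (UPow ℕ D)) := by
  exact stmt_14_general D (not_countableInterFilter_of_ne_pure hD)
end

section
/- The term algebra of the atom structure H consists exactly of the finite and the cofinite subsets of H. -/
/-- The atoms of the atom structure `H`: the elements of `ω` together with
three further pairwise distinct elements `1'`, `x` and `x⁻`. -/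
inductive HAtom : Type
  | nat : ℕ → HAtom
  | one : HAtom
  | x : HAtom
  | xc : HAtom

/-- The converse function on `H`: every atom is self-converse except `x` and
`x⁻`, which are each other's converses. -/
def HAtom.cnv : HAtom → HAtom
  | .x => .xc
  | .xc => .x
  | a => a

/-- The binary relation `C_H`: exactly the pairs `(a, cnv a)`, i.e. the pairs
`(a,a)` for `a ∈ H ∖ {x, x⁻}` together with `(x, x⁻)` and `(x⁻, x)`. -/
def CH (a b : HAtom) : Prop := b = HAtom.cnv a

/-- The set `F` of forbidden triples. -/
def FH : Set (HAtom × HAtom × HAtom) :=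
  {t | ∃ n : ℕ,
    t = (.nat n, .x, .nat (n + 1)) ∨ t = (.nat (n + 1), .xc, .nat n) ∨
    t = (.nat (n + 1), .nat n, .xc) ∨ t = (.xc, .nat n, .nat (n + 1)) ∨
    t = (.nat n, .nat (n + 1), .x) ∨ t = (.x, .nat (n + 1), .nat n)}

/-- The ternary relation `P_H`: the triples `(1',a,a)` and `(a,1',a)` for
`a ∈ H`, the triples `(a,b,1')` for `(a,b) ∈ C_H`, and the triples `(a,b,c)`
of elements of `H ∖ {1'}` not belonging to `F`. -/
def PH (a b c : HAtom) : Prop :=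
  (a = .one ∧ c = b) ∨ (b = .one ∧ c = a) ∨ (CH a b ∧ c = .one) ∨
  (a ≠ .one ∧ b ≠ .one ∧ c ≠ .one ∧ (a, b, c) ∉ FH)

/-- `X ; Y = {u : ∃ a ∈ X, b ∈ Y, P_H(a,b,u)}`. -/
def hComp (X Y : Set HAtom) : Set HAtom := {u | ∃ a ∈ X, ∃ b ∈ Y, PH a b u}

/-- `X⁻ = {u : ∃ a ∈ X, C_H(a,u)}`. -/
def hConv (X : Set HAtom) : Set HAtom := {u | ∃ a ∈ X, CH a u}

/-- Membership in the term algebra of `H`: the smallest collection of subsets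
of `H` containing all singletons and the set `I_H = {1'}`, closed under binary
union, complementation in `H`, the operation `;` and the operation `⁻`. -/
inductive InTAH : Set HAtom → Prop
  | sing (a : HAtom) : InTAH {a}
  | idset : InTAH {HAtom.one}
  | union {X Y : Set HAtom} : InTAH X → InTAH Y → InTAH (X ∪ Y)
  | compl {X : Set HAtom} : InTAH X → InTAH Xᶜ
  | comp {X Y : Set HAtom} : InTAH X → InTAH Y → InTAH (hComp X Y)
  | conv {X : Set HAtom} : InTAH X → InTAH (hConv X)

/-! The first two entries of a forbidden triple determine the third. Hence for atoms `a, b ≠ 1'` the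
product `{a} ; {b}` misses at most `1'` and one further atom. A product with a factor contained in
`{1'}` is either empty or equal to the other factor, so `;` never leaves the collection of finite
and cofinite sets. -/

/-- Membership in the finite–cofinite algebra on `α`, with which the term algebra of `H` is
identified for `α = H`. -/
def IsFiniteOrCofinite {α : Type*} (X : Set α) : Prop := X.Finite ∨ Xᶜ.Finite

namespace IsFiniteOrCofinite

variable {α β : Type*} {X Y : Set α}

theorem compl (hX : IsFiniteOrCofinite X) : IsFiniteOrCofinite Xᶜ := by
  simpa only [IsFiniteOrCofinite, compl_compl] using hX.symm

theorem union (hX : IsFiniteOrCofinite X) (hY : IsFiniteOrCofinite Y) :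
    IsFiniteOrCofinite (X ∪ Y) := by
  rcases hX with hX | hX
  · rcases hY with hY | hY
    · exact .inl (hX.union hY)
    · exact .inr (hY.subset (Set.compl_subset_compl.2 Set.subset_union_right))
  · exact .inr (hX.subset (Set.compl_subset_compl.2 Set.subset_union_left))

theorem image {f : α → β} (hf : f.Surjective) (hX : IsFiniteOrCofinite X) :
    IsFiniteOrCofinite (f '' X) :=
  hX.imp (·.image f) fun hX => (hX.image f).subset (Set.subset_image_compl hf)

end IsFiniteOrCofinite

theorem HAtom.cnv_involutive : Function.Involutive HAtom.cnv := by
  rintro (_ | _ | _ | _) <;> rfl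

theorem hConv_eq_image_cnv (X : Set HAtom) : hConv X = HAtom.cnv '' X := by
  ext u
  simp only [hConv, CH, Set.mem_ofPred_eq, Set.mem_image, eq_comm]

theorem PH_one_left {b c : HAtom} : PH .one b c ↔ c = b := by
  cases b <;> simp [PH, CH, HAtom.cnv]

theorem PH_one_right {a c : HAtom} : PH a .one c ↔ c = a := by
  cases a <;> simp [PH, CH, HAtom.cnv]

theorem empty_hComp (Y : Set HAtom) : hComp ∅ Y = ∅ := by
  simp [hComp]

theorem hComp_empty (X : Set HAtom) : hComp X ∅ = ∅ := by
  simp [hComp]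

theorem singleton_one_hComp (Y : Set HAtom) : hComp {.one} Y = Y := by
  simp [hComp, PH_one_left]

theorem hComp_singleton_one (X : Set HAtom) : hComp X {.one} = X := by
  simp [hComp, PH_one_right]

theorem subsingleton_setOf_mem_FH (a b : HAtom) : {c | (a, b, c) ∈ FH}.Subsingleton := by
  rintro c ⟨m, hc⟩ d ⟨n, hd⟩
  simp only [Prod.mk.injEq] at hc
  rcases hc with h | h | h | h | h | h <;> obtain ⟨rfl, rfl, rfl⟩ := h <;> grind

theorem finite_compl_hComp {X Y : Set HAtom} (hX : ¬X ⊆ {.one}) (hY : ¬Y ⊆ {.one}) :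
    (hComp X Y)ᶜ.Finite := by
  obtain ⟨a, haX, ha⟩ := Set.not_subset.1 hX
  obtain ⟨b, hbY, hb⟩ := Set.not_subset.1 hY
  have compl_subset : (hComp X Y)ᶜ ⊆ insert .one {c | (a, b, c) ∈ FH} := by
    rw [Set.compl_subset_comm]
    intro c hc
    obtain ⟨hc, hcF⟩ := not_or.1 hc
    exact ⟨a, haX, b, hbY, .inr (.inr (.inr ⟨ha, hb, hc, hcF⟩))⟩
  exact ((subsingleton_setOf_mem_FH a b).finite.insert .one).subset compl_subset

theorem isFiniteOrCofinite_hComp {X Y : Set HAtom} (hX : IsFiniteOrCofinite X)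
    (hY : IsFiniteOrCofinite Y) : IsFiniteOrCofinite (hComp X Y) := by
  by_cases hX₁ : X ⊆ {.one}
  · obtain rfl | rfl := Set.subset_singleton_iff_eq.1 hX₁
    · rwa [empty_hComp]
    · rwa [singleton_one_hComp]
  by_cases hY₁ : Y ⊆ {.one}
  · obtain rfl | rfl := Set.subset_singleton_iff_eq.1 hY₁
    · rwa [hComp_empty]
    · rwa [hComp_singleton_one]
  exact .inr (finite_compl_hComp hX₁ hY₁)

namespace InTAH

theorem isFiniteOrCofinite {X : Set HAtom} (hX : InTAH X) : IsFiniteOrCofinite X := by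
  induction hX with
  | sing a => exact .inl (Set.finite_singleton a)
  | idset => exact .inl (Set.finite_singleton _)
  | union _ _ ihX ihY => exact ihX.union ihY
  | compl _ ih => exact ih.compl
  | comp _ _ ihX ihY => exact isFiniteOrCofinite_hComp ihX ihY
  | conv _ ih =>
    rw [hConv_eq_image_cnv]
    exact ih.image HAtom.cnv_involutive.surjective

theorem empty : InTAH ∅ := by
  simpa using (idset.union idset.compl).compl

theorem of_finite {X : Set HAtom} (hX : X.Finite) : InTAH X := by
  induction X, hX using Set.Finite.induction_on with
  | empty => exact empty
  | @insert a X _ _ ih => exact (sing a).union ih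

theorem of_finite_compl {X : Set HAtom} (hX : Xᶜ.Finite) : InTAH X :=
  compl_compl X ▸ (of_finite hX).compl

end InTAH

/-- The term algebra of the atom structure `H` consists exactly of the finite
and the cofinite subsets of `H`. -/
theorem stmt_16 (X : Set HAtom) : InTAH X ↔ (X.Finite ∨ Xᶜ.Finite) :=
  ⟨InTAH.isFiniteOrCofinite, fun hX => hX.elim InTAH.of_finite InTAH.of_finite_compl⟩
end
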